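/- Let A be a unital complex Banach algebra, n ≥ 2, and let e and f be n-potents in A. Set M = (1 + ‖e‖)^{2n}. If ‖e − f‖ < 2(n−1)/((n² + n + 2)·M), then there exists an invertible element z in A with ‖z − 1‖ < 1 and z e z^{-1} = f. In particular, e and f are similar. -/

import Mathlib

/-!
Write `n = m + 1`. Then `e ^ m` is an idempotent acting as the identity on the range of `e`, so that
`e ^ (2 * m - k)` plays the role of `e⁻ᵏ` and the average of `f ^ k * e ^ (2 * m - k)` over
`1 ≤ k ≤ m` intertwines `e` and `f`. Adding `(1 - f ^ m) * (1 - e ^ m)`, which is annihilated by `f`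
on the left and by `e` on the right, takes care of the kernels and gives an intertwiner `z` that
equals `1` when `e = f`. Since `e * (1 - e ^ m) = 0`, one gets
`z - 1 = m⁻¹ • ∑ (f ^ k - e ^ k) * e ^ (2 * m - k) - f ^ (m - 1) * (f - e) * (1 - e ^ m)`,
whose norm is at most `((m + 1) / 2 + 1) * (1 + ‖e‖) ^ (2 * m - 1) * ‖f - e‖`.
-/

open Finset

section Algebra

variable {R : Type*} [Ring R] {m : ℕ} {e f : R}

/-- The sum of `f ^ k * e ^ (2 * m - k)` over `1 ≤ k ≤ m`. For `(m + 1)`-potents it intertwines `e`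
and `f`, the factor `e ^ (2 * m - k)` standing for `e⁻ᵏ`; the exponent `2 * m - k`, rather than
`m - k`, keeps it positive also for `k = m`. -/
def intertwiningSum (m : ℕ) (e f : R) : R :=
  ∑ k ∈ range m, f ^ (k + 1) * e ^ (2 * m - (k + 1))

/-- The intertwiner of two `(m + 1)`-potents `e` and `f`: the mean of the `f ^ k * e ^ (2 * m - k)`
carries the range of `e` to the range of `f`, and the second summand carries the kernel of `e` to
the kernel of `f`. -/
def npotentIntertwiner (𝕜 : Type*) [Field 𝕜] [Algebra 𝕜 R] (m : ℕ) (e f : R) : R :=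
  (m : 𝕜)⁻¹ • intertwiningSum m e f + (1 - f ^ m) * (1 - e ^ m)

theorem isIdempotentElem_pow_of_pow_succ_eq {M : Type*} [Monoid M] {m : ℕ} {e : M}
    (he : e ^ (m + 1) = e) : IsIdempotentElem (e ^ m) := by
  rcases m with _ | j
  · simp [IsIdempotentElem]
  · calc e ^ (j + 1) * e ^ (j + 1) = e ^ (j + 1 + 1) * e ^ j := by
          rw [← pow_add, ← pow_add]; congr 1; ring
      _ = e ^ (j + 1) := by rw [he, pow_succ']

theorem mul_one_sub_pow_eq_zero (he : e ^ (m + 1) = e) : e * (1 - e ^ m) = 0 := by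
  rw [mul_sub, mul_one, ← pow_succ', he, sub_self]

theorem one_sub_pow_mul_eq_zero (he : e ^ (m + 1) = e) : (1 - e ^ m) * e = 0 := by
  rw [sub_mul, one_mul, ← pow_succ, he, sub_self]

theorem semiconjBy_intertwiningSum (he : e ^ (m + 1) = e) (hf : f ^ (m + 1) = f) :
    SemiconjBy (intertwiningSum m e f) e f := by
  let term (k : ℕ) : R := f ^ (k + 1) * e ^ (2 * m - k)
  have telescope :
      f * intertwiningSum m e f - intertwiningSum m e f * e = term m - term 0 := by
    rw [← sum_range_sub, intertwiningSum, mul_sum, sum_mul, ← sum_sub_distrib]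
    refine sum_congr rfl fun k hk ↦ ?_
    have hk : 2 * m - k = 2 * m - (k + 1) + 1 := by have := mem_range.mp hk; omega
    simp only [term, hk, pow_succ' f (k + 1), pow_succ e, mul_assoc]
  have endpoints : term m = term 0 := by
    have hidem : e ^ (2 * m) = e ^ m := by
      rw [two_mul, pow_add, isIdempotentElem_pow_of_pow_succ_eq he]
    have hm : 2 * m - m = m := by omega
    simp only [term, hm, hf, hidem, Nat.sub_zero, zero_add, pow_one]
  rw [endpoints, sub_self, sub_eq_zero] at telescope
  exact telescope.symm

theorem semiconjBy_npotentIntertwiner (𝕜 : Type*) [Field 𝕜] [Algebra 𝕜 R]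
    (he : e ^ (m + 1) = e) (hf : f ^ (m + 1) = f) :
    SemiconjBy (npotentIntertwiner 𝕜 m e f) e f := by
  have kernels : SemiconjBy ((1 - f ^ m) * (1 - e ^ m)) e f := by
    rw [SemiconjBy, mul_assoc, one_sub_pow_mul_eq_zero he, mul_zero, ← mul_assoc,
      mul_one_sub_pow_eq_zero hf, zero_mul]
  exact ((semiconjBy_intertwiningSum he hf).smul_left _).add_left kernels

theorem intertwiningSum_sub_nsmul (he : IsIdempotentElem (e ^ m)) :
    intertwiningSum m e f - m • e ^ m =
      ∑ k ∈ range m, (f ^ (k + 1) - e ^ (k + 1)) * e ^ (2 * m - (k + 1)) := by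
  have hterm : ∀ k ∈ range m, e ^ (k + 1) * e ^ (2 * m - (k + 1)) = e ^ m := fun k hk ↦ by
    have hk : k + 1 + (2 * m - (k + 1)) = m + m := by have := mem_range.mp hk; omega
    rw [← pow_add, hk, pow_add, he]
  simp only [sub_mul, sum_sub_distrib, sum_congr rfl hterm, sum_const, card_range, intertwiningSum]

theorem npotentIntertwiner_sub_one {𝕜 : Type*} [Field 𝕜] [Algebra 𝕜 R]
    (hm : (m : 𝕜) ≠ 0) :
    npotentIntertwiner 𝕜 m e f - 1 =
      (m : 𝕜)⁻¹ • (intertwiningSum m e f - m • e ^ m) - f ^ m * (1 - e ^ m) := by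
  rw [smul_sub, ← Nat.cast_smul_eq_nsmul 𝕜 m, inv_smul_smul₀ hm, npotentIntertwiner]
  noncomm_ring

theorem pow_succ_mul_one_sub_pow (he : e ^ (m + 1) = e) (j : ℕ) :
    f ^ (j + 1) * (1 - e ^ m) = f ^ j * ((f - e) * (1 - e ^ m)) := by
  rw [sub_mul, mul_one_sub_pow_eq_zero he, sub_zero, ← mul_assoc, pow_succ]

end Algebra

section Norm

variable {R : Type*} [SeminormedRing R] {m : ℕ} {e f x y : R} {N : ℝ}

theorem norm_pow_mul_le (x y : R) (k : ℕ) : ‖x ^ k * y‖ ≤ ‖x‖ ^ k * ‖y‖ := by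
  rcases k.eq_zero_or_pos with rfl | hk
  · simp
  · exact norm_mul_le_of_le (norm_pow_le' x hk) le_rfl

theorem norm_pow_succ_sub_pow_succ_le (hx : ‖x‖ ≤ N) (hy : ‖y‖ ≤ N) (k : ℕ) :
    ‖x ^ (k + 1) - y ^ (k + 1)‖ ≤ (k + 1) * N ^ k * ‖x - y‖ := by
  induction k with
  | zero => simp
  | succ k ih =>
    have hN : 0 ≤ N := (norm_nonneg x).trans hx
    calc ‖x ^ (k + 1 + 1) - y ^ (k + 1 + 1)‖
        = ‖x ^ (k + 1) * (x - y) + (x ^ (k + 1) - y ^ (k + 1)) * y‖ := by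
          rw [pow_succ x (k + 1), pow_succ y (k + 1)]; congr 1; noncomm_ring
      _ ≤ ‖x‖ ^ (k + 1) * ‖x - y‖ + ‖x ^ (k + 1) - y ^ (k + 1)‖ * ‖y‖ :=
          norm_add_le_of_le (norm_pow_mul_le _ _ _) (norm_mul_le _ _)
      _ ≤ N ^ (k + 1) * ‖x - y‖ + (k + 1) * N ^ k * ‖x - y‖ * N := by gcongr
      _ = ((k + 1 : ℕ) + 1) * N ^ (k + 1) * ‖x - y‖ := by push_cast; ring

theorem norm_intertwiningSum_sub_nsmul_le (he : IsIdempotentElem (e ^ m)) (heN : ‖e‖ ≤ N)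
    (hfN : ‖f‖ ≤ N) :
    ‖intertwiningSum m e f - m • e ^ m‖ ≤ m * (m + 1) / 2 * N ^ (2 * m - 1) * ‖f - e‖ := by
  have hN : 0 ≤ N := (norm_nonneg e).trans heN
  have gauss : ∑ k ∈ range m, ((k : ℝ) + 1) = m * (m + 1) / 2 := by
    have h := sum_range_id_mul_two (m + 1)
    rw [sum_range_succ', add_zero, Nat.add_sub_cancel] at h
    rw [eq_div_iff two_ne_zero]
    exact_mod_cast h.trans (mul_comm _ _)
  have hterm : ∀ k ∈ range m, ‖(f ^ (k + 1) - e ^ (k + 1)) * e ^ (2 * m - (k + 1))‖ ≤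
      (k + 1) * (N ^ (2 * m - 1) * ‖f - e‖) := fun k hk ↦ by
    have hk := mem_range.mp hk
    calc ‖(f ^ (k + 1) - e ^ (k + 1)) * e ^ (2 * m - (k + 1))‖
        ≤ (k + 1) * N ^ k * ‖f - e‖ * ‖e‖ ^ (2 * m - (k + 1)) :=
          norm_mul_le_of_le (norm_pow_succ_sub_pow_succ_le hfN heN k)
            (norm_pow_le' e (by omega))
      _ ≤ (k + 1) * N ^ k * ‖f - e‖ * N ^ (2 * m - (k + 1)) := by gcongr
      _ = (k + 1) * (N ^ (k + (2 * m - (k + 1))) * ‖f - e‖) := by rw [pow_add]; ring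
      _ = (k + 1) * (N ^ (2 * m - 1) * ‖f - e‖) := by congr 4; omega
  rw [intertwiningSum_sub_nsmul he]
  calc _ ≤ ∑ k ∈ range m, ((k : ℝ) + 1) * (N ^ (2 * m - 1) * ‖f - e‖) := norm_sum_le_of_le _ hterm
    _ = m * (m + 1) / 2 * N ^ (2 * m - 1) * ‖f - e‖ := by rw [← sum_mul, gauss, mul_assoc]

theorem norm_pow_mul_one_sub_pow_le (hm : m ≠ 0) (he : e ^ (m + 1) = e) (hf : ‖f‖ ≤ 1 + ‖e‖) :
    ‖f ^ m * (1 - e ^ m)‖ ≤ (1 + ‖e‖) ^ (2 * m - 1) * ‖f - e‖ := by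
  obtain ⟨j, rfl⟩ := Nat.exists_eq_succ_of_ne_zero hm
  have hsub : ‖(f - e) * (1 - e ^ (j + 1))‖ ≤ ‖f - e‖ * (1 + ‖e‖) ^ (j + 1) :=
    calc ‖(f - e) * (1 - e ^ (j + 1))‖ = ‖(f - e) - (f - e) * e ^ (j + 1)‖ := by
          rw [mul_sub, mul_one]
      _ ≤ ‖f - e‖ + ‖f - e‖ * ‖e‖ ^ (j + 1) :=
          norm_sub_le_of_le le_rfl (norm_mul_le_of_le le_rfl (norm_pow_le' e j.succ_pos))
      _ = ‖f - e‖ * (1 ^ (j + 1) + ‖e‖ ^ (j + 1)) := by rw [one_pow]; ring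
      _ ≤ ‖f - e‖ * (1 + ‖e‖) ^ (j + 1) := by
          gcongr
          exact pow_add_pow_le zero_le_one (norm_nonneg e) j.succ_ne_zero
  calc ‖f ^ (j + 1) * (1 - e ^ (j + 1))‖ = ‖f ^ j * ((f - e) * (1 - e ^ (j + 1)))‖ := by
        rw [pow_succ_mul_one_sub_pow he]
    _ ≤ (1 + ‖e‖) ^ j * (‖f - e‖ * (1 + ‖e‖) ^ (j + 1)) :=
        (norm_pow_mul_le _ _ _).trans (by gcongr)
    _ = (1 + ‖e‖) ^ (j + (j + 1)) * ‖f - e‖ := by rw [pow_add]; ring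
    _ = (1 + ‖e‖) ^ (2 * (j + 1) - 1) * ‖f - e‖ := by congr 2; omega

theorem norm_npotentIntertwiner_sub_one_le [NormedAlgebra ℝ R] (hm : m ≠ 0)
    (he : e ^ (m + 1) = e) (hf : ‖f‖ ≤ 1 + ‖e‖) :
    ‖npotentIntertwiner ℝ m e f - 1‖ ≤
      (m + 3) / 2 * (1 + ‖e‖) ^ (2 * m - 1) * ‖f - e‖ := by
  have hmR : (m : ℝ) ≠ 0 := Nat.cast_ne_zero.mpr hm
  have hmean : ‖(m : ℝ)⁻¹ • (intertwiningSum m e f - m • e ^ m)‖ ≤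
      (m + 1) / 2 * (1 + ‖e‖) ^ (2 * m - 1) * ‖f - e‖ :=
    calc _ ≤ (m : ℝ)⁻¹ * (m * (m + 1) / 2 * (1 + ‖e‖) ^ (2 * m - 1) * ‖f - e‖) := by
          rw [norm_smul, norm_inv, Real.norm_natCast]
          gcongr
          exact norm_intertwiningSum_sub_nsmul_le (isIdempotentElem_pow_of_pow_succ_eq he)
            (le_add_of_nonneg_left zero_le_one) hf
      _ = (m + 1) / 2 * (1 + ‖e‖) ^ (2 * m - 1) * ‖f - e‖ := by field_simp
  rw [npotentIntertwiner_sub_one hmR]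
  refine (norm_sub_le_of_le hmean (norm_pow_mul_one_sub_pow_le hm he hf)).trans_eq ?_
  ring

end Norm

theorem exists_units_conj_eq_of_semiconjBy {A : Type*} [NormedRing A] [HasSummableGeomSeries A]
    {e f z : A} (hz : ‖z - 1‖ < 1) (h : SemiconjBy z e f) :
    ∃ u : Aˣ, ‖u.val - 1‖ < 1 ∧ u.val * e * (u⁻¹).val = f := by
  have hz' : ‖1 - z‖ < 1 := by rwa [norm_sub_rev]
  have hval : (Units.oneSub (1 - z) hz').val = z := by simp
  refine ⟨Units.oneSub (1 - z) hz', by rwa [hval], ?_⟩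
  rw [Units.mul_inv_eq_iff_eq_mul, hval, h.eq]

theorem npotent_close_implies_similar_general {A : Type*} [NormedRing A] [NormedAlgebra ℝ A]
    [HasSummableGeomSeries A] (n : ℕ) (hn : 2 ≤ n) (e f : A) (he : e ^ n = e) (hf : f ^ n = f)
    (hclose : ‖e - f‖ < 2 / (((n : ℝ) + 2) * (1 + ‖e‖) ^ (2 * n - 3))) :
    ∃ z : Aˣ, ‖z.val - 1‖ < 1 ∧ z.val * e * (z⁻¹).val = f := by
  obtain ⟨m, rfl⟩ : ∃ m, n = m + 1 := ⟨n - 1, by omega⟩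
  rw [show 2 * (m + 1) - 3 = 2 * m - 1 by omega, norm_sub_rev, lt_div_iff₀ (by positivity)]
    at hclose
  push_cast at hclose
  have hfe : ‖f - e‖ ≤ 1 := by
    have hN : 1 ≤ (1 + ‖e‖) ^ (2 * m - 1) :=
      one_le_pow₀ (le_add_of_nonneg_right (norm_nonneg e))
    have hfactor : 2 ≤ ((m : ℝ) + 1 + 2) * (1 + ‖e‖) ^ (2 * m - 1) := by nlinarith
    nlinarith [norm_nonneg (f - e)]
  have hfN : ‖f‖ ≤ 1 + ‖e‖ := by linarith [norm_sub_norm_le f e]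
  refine exists_units_conj_eq_of_semiconjBy ?_ (semiconjBy_npotentIntertwiner ℝ he hf)
  refine (norm_npotentIntertwiner_sub_one_le (by omega) he hfN).trans_lt ?_
  linarith

theorem closeness_bound_le {n : ℕ} {N : ℝ} (hN : 1 ≤ N) :
    2 * ((n : ℝ) - 1) / (((n : ℝ) ^ 2 + n + 2) * N ^ (2 * n)) ≤
      2 / (((n : ℝ) + 2) * N ^ (2 * n - 3)) := by
  rw [div_le_div_iff₀ (by positivity) (by positivity)]
  calc 2 * ((n : ℝ) - 1) * ((n + 2) * N ^ (2 * n - 3))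
      = 2 * ((n : ℝ) ^ 2 + n - 2) * N ^ (2 * n - 3) := by ring
    _ ≤ 2 * ((n : ℝ) ^ 2 + n + 2) * N ^ (2 * n) := by
        gcongr
        · linarith
        · omega
    _ = 2 * (((n : ℝ) ^ 2 + n + 2) * N ^ (2 * n)) := by ring

/-- Let `A` be a unital complex Banach algebra, `n ≥ 2`, and `e`, `f` `n`-potents in `A`.
Set `M = (1 + ‖e‖)^(2n)`.  If `‖e - f‖ < 2(n-1)/((n² + n + 2)·M)`, then there is an
invertible `z` in `A` with `‖z - 1‖ < 1` and `z e z⁻¹ = f`; in particular `e ∼ₛ f`. -/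
theorem npotent_close_implies_similar {A : Type*} [NormedRing A] [NormedAlgebra ℂ A]
    [CompleteSpace A] (n : ℕ) (hn : 2 ≤ n)
    (e f : A) (he : e ^ n = e) (hf : f ^ n = f)
    (hclose : ‖e - f‖ < 2 * ((n : ℝ) - 1) /
      (((n : ℝ) ^ 2 + n + 2) * (1 + ‖e‖) ^ (2 * n))) :
    ∃ z : Aˣ, ‖z.val - 1‖ < 1 ∧ z.val * e * (z⁻¹).val = f :=
  npotent_close_implies_similar_general n hn e f he hf (hclose.trans_le
    (closeness_bound_le (le_add_of_nonneg_right (norm_nonneg e))))
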